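/- There exists a constant C > 0 such that for every symmetric tensor field k (a C^∞ map from ℝ³ to symmetric real 3×3 matrices, 1-periodic in the second and third variables) satisfying ∂_i ∂_j k_{ij} = 0 at all points of [0,1]×ℝ², and the boundary conditions k₁₁(x,y,z) = 0 and ∂₁k₁₁(x,y,z) + 2∂₂k₁₂(x,y,z) + 2∂₃k₁₃(x,y,z) = 0 whenever x ∈ {0,1}, one has ∫_Σ Σ_{i,j} ( k_{ij}² + Σ_l (∂_l k_{ij})² ) ≤ C [ ∫_Σ Σ_{i,j} k_{ij}² + ∫_Σ Σ_{i,j} (curl k)_{ij}² + ∫_Σ Σ_i (M k)_i² ]. -/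

import Mathlib

open MeasureTheory

/-- Partial derivative in the `i`-th coordinate direction (coordinates `x,y,z ↔ 0,1,2`). -/
noncomputable def pd (i : Fin 3) (f : (Fin 3 → ℝ) → ℝ) : (Fin 3 → ℝ) → ℝ :=
  fun p => fderiv ℝ f p (Pi.single i 1)

/-- 1-periodicity in the second and third variables. -/
def PerYZ (f : (Fin 3 → ℝ) → ℝ) : Prop :=
  ∀ p : Fin 3 → ℝ, f (p + Pi.single 1 1) = f p ∧ f (p + Pi.single 2 1) = f p

/-- The unit cube in `ℝ³`, the fundamental domain of `Σ = (0,1) × T²`. -/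
def Cube : Set (Fin 3 → ℝ) := Set.Icc 0 1

/-- The alternating symbol `ε_{ijk}` with `ε₀₁₂ = 1`. -/
noncomputable def epsR (i j k : Fin 3) : ℝ :=
  (((i : ℕ) : ℝ) - ((j : ℕ) : ℝ)) * (((j : ℕ) : ℝ) - ((k : ℕ) : ℝ))
    * (((k : ℕ) : ℝ) - ((i : ℕ) : ℝ)) / 2

/-- The curl of a symmetric tensor field: `(curl k)_{ij} = ½(ε_{abi}∂ₐk_{bj} + ε_{abj}∂ₐk_{bi})`. -/
noncomputable def curlT (k : Fin 3 → Fin 3 → (Fin 3 → ℝ) → ℝ) (i j : Fin 3) :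
    (Fin 3 → ℝ) → ℝ :=
  fun p => (∑ a, ∑ b, (epsR a b i * pd a (k b j) p + epsR a b j * pd a (k b i) p)) / 2

/-- The momentum operator `(M k)_i = ∂ᵢ(k_{jj}) - ∂ⱼ k_{ij}`. -/
noncomputable def momT (k : Fin 3 → Fin 3 → (Fin 3 → ℝ) → ℝ) (i : Fin 3) :
    (Fin 3 → ℝ) → ℝ :=
  fun p => ∑ j, (pd i (k j j) p - pd j (k i j) p)

/-!
Every vector field satisfies `|∇v|² = |curl v|² + (div v)² + div ((v · ∇)v - (div v) v)`. Sum this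
over the rows `kⱼ` of `k` and let `D` be the vector field of their divergences. Since
`M k = ∇ tr k - D`, one has `|D|² ≤ |M k|² + 2 ∇ tr k · D`, and the last term is the divergence of
`2 (tr k) D` because `div D = 0`. Hence `|∇k|²` is bounded by the squares of the row-wise curl and
of `M k` up to a divergence. Its flux through the faces need not vanish, but modulo tangential
divergences the boundary conditions turn it into the flux of `2 (k₁₂ curl k₃ - k₁₃ curl k₂)`. As
curls are divergence free, the divergence of that field is a sum of products of a derivative of `k`
with a curl, which Young's inequality absorbs. Finally, the symmetric part of the row-wise curl is
`curl k`, and its antisymmetric part is determined by `M k`.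
-/

section VectorCalculus

variable {f g : (Fin 3 → ℝ) → ℝ} {v w : Fin 3 → (Fin 3 → ℝ) → ℝ}

theorem pd_add (i : Fin 3) (hf : Differentiable ℝ f) (hg : Differentiable ℝ g) :
    pd i (f + g) = pd i f + pd i g := by
  ext p
  simp [pd, fderiv_add (hf p) (hg p)]

theorem pd_sub (i : Fin 3) (hf : Differentiable ℝ f) (hg : Differentiable ℝ g) :
    pd i (f - g) = pd i f - pd i g := by
  ext p
  simp [pd, fderiv_sub (hf p) (hg p)]

theorem pd_mul (i : Fin 3) (hf : Differentiable ℝ f) (hg : Differentiable ℝ g) :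
    pd i (f * g) = pd i f * g + f * pd i g := by
  ext p
  simp only [pd, fderiv_mul (hf p) (hg p), add_apply, smul_apply, smul_eq_mul, Pi.add_apply,
    Pi.mul_apply]
  ring

theorem pd_const_smul (i : Fin 3) (c : ℝ) (hf : Differentiable ℝ f) :
    pd i (c • f) = c • pd i f := by
  ext p
  simp [pd, fderiv_const_smul (hf p)]

theorem pd_sum {ι : Type*} (s : Finset ι) {F : ι → (Fin 3 → ℝ) → ℝ} (i : Fin 3)
    (hF : ∀ a ∈ s, Differentiable ℝ (F a)) : pd i (∑ a ∈ s, F a) = ∑ a ∈ s, pd i (F a) := by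
  ext p
  simp [pd, fderiv_sum fun a ha => hF a ha p]

theorem contDiff_finset_sum {ι : Type*} {s : Finset ι} {F : ι → (Fin 3 → ℝ) → ℝ} {n : WithTop ℕ∞}
    (hF : ∀ a ∈ s, ContDiff ℝ n (F a)) : ContDiff ℝ n (∑ a ∈ s, F a) := by
  simpa only [Finset.sum_fn] using ContDiff.sum hF

theorem contDiff_pd {m n : WithTop ℕ∞} (hf : ContDiff ℝ n f) (hmn : m + 1 ≤ n) (i : Fin 3) :
    ContDiff ℝ m (pd i f) :=
  (hf.fderiv_right hmn).clm_apply contDiff_const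

theorem contDiff_one_pd (hf : ContDiff ℝ 2 f) (i : Fin 3) : ContDiff ℝ 1 (pd i f) :=
  contDiff_pd hf one_add_one_eq_two.le i

theorem pd_comm (hf : ContDiff ℝ 2 f) (i j : Fin 3) : pd i (pd j f) = pd j (pd i f) := by
  ext p
  have hd : DifferentiableAt ℝ (fderiv ℝ f) p :=
    (hf.fderiv_right one_add_one_eq_two.le).differentiable one_ne_zero p
  have pd_pd (a b : Fin 3) :
      pd a (pd b f) p = fderiv ℝ (fderiv ℝ f) p (Pi.single a 1) (Pi.single b 1) := by
    unfold pd
    simp [fderiv_clm_apply hd (differentiableAt_const _)]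
  rw [pd_pd, pd_pd]
  exact hf.contDiffAt.isSymmSndFDerivAt (by simp) _ _

theorem perYZ_pd (hf : PerYZ f) (i : Fin 3) : PerYZ (pd i f) := by
  have pd_apply_add (c : Fin 3 → ℝ) (hc : ∀ p, f (p + c) = f p) (p : Fin 3 → ℝ) :
      pd i f (p + c) = pd i f p := by
    simp only [pd, ← fderiv_comp_add_right, hc]
  exact fun p => ⟨pd_apply_add _ (fun q => (hf q).1) p, pd_apply_add _ (fun q => (hf q).2) p⟩

/-- The divergence `∂ᵢvᵢ` of a vector field on `ℝ³`. -/
noncomputable def divergence (v : Fin 3 → (Fin 3 → ℝ) → ℝ) : (Fin 3 → ℝ) → ℝ :=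
  ∑ i, pd i (v i)

/-- The curl of a vector field on `ℝ³`; the cyclic indices `i, i + 1, i + 2` in `Fin 3` replace the
alternating symbol. -/
noncomputable def curl (v : Fin 3 → (Fin 3 → ℝ) → ℝ) (i : Fin 3) : (Fin 3 → ℝ) → ℝ :=
  pd (i + 1) (v (i + 2)) - pd (i + 2) (v (i + 1))

/-- The vector field `(v · ∇)v - (div v) v`; its divergence is the null Lagrangian
`∂ₗvᵢ ∂ᵢvₗ - (div v)²`. -/
noncomputable def nullFlux (v : Fin 3 → (Fin 3 → ℝ) → ℝ) : Fin 3 → (Fin 3 → ℝ) → ℝ :=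
  ∑ i, v i • (fun l => pd i (v l)) - divergence v • v

section Smoothness

variable {m n : WithTop ℕ∞}

theorem contDiff_divergence (hv : ∀ i, ContDiff ℝ n (v i)) (hmn : m + 1 ≤ n) :
    ContDiff ℝ m (divergence v) :=
  contDiff_finset_sum fun i _ => contDiff_pd (hv i) hmn i

theorem contDiff_curl (hv : ∀ i, ContDiff ℝ n (v i)) (hmn : m + 1 ≤ n) (i : Fin 3) :
    ContDiff ℝ m (curl v i) :=
  (contDiff_pd (hv _) hmn _).sub (contDiff_pd (hv _) hmn _)

theorem contDiff_nullFlux (hv : ∀ i, ContDiff ℝ n (v i)) (hmn : m + 1 ≤ n) (l : Fin 3) :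
    ContDiff ℝ m (nullFlux v l) := by
  have hv' := fun i => (hv i).of_le (le_self_add.trans hmn)
  have hadvection : ContDiff ℝ m ((∑ i, v i • fun l => pd i (v l)) l) := by
    rw [Finset.sum_apply]
    exact contDiff_finset_sum fun i _ => (hv' i).mul (contDiff_pd (hv l) hmn i)
  exact hadvection.sub ((contDiff_divergence hv hmn).mul (hv' l))

end Smoothness

theorem divergence_add (hv : ∀ i, Differentiable ℝ (v i)) (hw : ∀ i, Differentiable ℝ (w i)) :
    divergence (v + w) = divergence v + divergence w := by
  simp only [divergence, Pi.add_apply, pd_add _ (hv _) (hw _), Finset.sum_add_distrib]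

theorem divergence_sub (hv : ∀ i, Differentiable ℝ (v i)) (hw : ∀ i, Differentiable ℝ (w i)) :
    divergence (v - w) = divergence v - divergence w := by
  simp only [divergence, Pi.sub_apply, pd_sub _ (hv _) (hw _), Finset.sum_sub_distrib]

theorem divergence_const_smul (c : ℝ) (hv : ∀ i, Differentiable ℝ (v i)) :
    divergence (c • v) = c • divergence v := by
  simp only [divergence, Pi.smul_apply, pd_const_smul _ c (hv _), Finset.smul_sum]

theorem divergence_sum {ι : Type*} (s : Finset ι) {V : ι → Fin 3 → (Fin 3 → ℝ) → ℝ}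
    (hV : ∀ a ∈ s, ∀ i, Differentiable ℝ (V a i)) :
    divergence (∑ a ∈ s, V a) = ∑ a ∈ s, divergence (V a) := by
  simp only [divergence, Finset.sum_apply, pd_sum s _ fun a ha => hV a ha _]
  exact Finset.sum_comm

theorem divergence_smul (hf : Differentiable ℝ f) (hv : ∀ i, Differentiable ℝ (v i)) :
    divergence (f • v) = ∑ i, pd i f * v i + f * divergence v := by
  simp only [divergence, Pi.smul_apply, smul_eq_mul, pd_mul _ hf (hv _), Finset.sum_add_distrib,
    Finset.mul_sum]

theorem divergence_pd (hv : ∀ i, ContDiff ℝ 2 (v i)) (i : Fin 3) :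
    divergence (fun l => pd i (v l)) = pd i (divergence v) := by
  have hd := fun l => (contDiff_one_pd (hv l) l).differentiable one_ne_zero
  simp only [divergence, pd_sum _ _ fun l _ => hd l, pd_comm (hv _) _ i]

theorem divergence_curl (hv : ∀ i, ContDiff ℝ 2 (v i)) : divergence (curl v) = 0 := by
  have hd := fun i j => (contDiff_one_pd (hv j) i).differentiable one_ne_zero
  simp only [divergence, curl, Fin.sum_univ_three, pd_sub _ (hd _ _) (hd _ _)]
  simp only [zero_add, Fin.reduceAdd]
  rw [pd_comm (hv 2) 1 0, pd_comm (hv 1) 2 0, pd_comm (hv 0) 2 1]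
  ring

theorem divergence_nullFlux (hv : ∀ i, ContDiff ℝ 2 (v i)) :
    divergence (nullFlux v) = ∑ i, ∑ l, pd l (v i) * pd i (v l) - divergence v ^ 2 := by
  have hd := fun i => (hv i).differentiable two_ne_zero
  have hpd := fun i j => (contDiff_one_pd (hv j) i).differentiable one_ne_zero
  have hdiv := (contDiff_divergence hv one_add_one_eq_two.le).differentiable one_ne_zero
  unfold nullFlux
  rw [divergence_sub, divergence_sum, divergence_smul hdiv hd]
  · simp only [divergence_smul (hd _) (hpd _), divergence_pd hv, Finset.sum_add_distrib,
      mul_comm (v _)]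
    ring
  · exact fun i _ l => (hd i).mul (hpd i l)
  · intro l
    rw [Finset.sum_apply]
    exact Differentiable.sum fun i _ => (hd i).mul (hpd i l)
  · exact fun l => hdiv.mul (hd l)

theorem sum_curl_sq (v : Fin 3 → (Fin 3 → ℝ) → ℝ) :
    ∑ i, curl v i ^ 2 = ∑ i, ∑ l, pd l (v i) ^ 2 - ∑ i, ∑ l, pd l (v i) * pd i (v l) := by
  simp only [curl, Fin.sum_univ_three, zero_add, Fin.reduceAdd]
  ring

theorem sum_sum_pd_sq (hv : ∀ i, ContDiff ℝ 2 (v i)) :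
    ∑ i, ∑ l, pd l (v i) ^ 2 = ∑ i, curl v i ^ 2 + divergence v ^ 2 + divergence (nullFlux v) := by
  rw [sum_curl_sq, divergence_nullFlux hv]
  ring

end VectorCalculus

theorem integrableOn_cube {f : (Fin 3 → ℝ) → ℝ} (hf : Continuous f) : IntegrableOn f Cube :=
  hf.continuousOn.integrableOn_compact isCompact_Icc

section DivergenceTheorem

variable {F U : Fin 3 → (Fin 3 → ℝ) → ℝ}

theorem integral_divergence_eq_zero (hF : ∀ i, ContDiff ℝ 1 (F i)) (hper : ∀ i ≠ 0, PerYZ (F i))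
    (hface : ∀ p : Fin 3 → ℝ, p 0 = 0 ∨ p 0 = 1 → F 0 p = 0) :
    ∫ p in Cube, divergence F p = 0 := by
  have hintegrable : IntegrableOn (fun p => ∑ i, fderiv ℝ (F i) p (Pi.single i 1)) Cube := by
    simpa [divergence, pd, Finset.sum_fn] using
      integrableOn_cube (contDiff_divergence hF (zero_add 1).le).continuous
  have hdiv := integral_divergence_of_hasFDerivAt_off_countable' (0 : Fin 3 → ℝ) 1 zero_le_one F
    (fun i => fderiv ℝ (F i)) ∅ Set.countable_empty (fun i => (hF i).continuous.continuousOn)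
    (fun p _ i => ((hF i).differentiable one_ne_zero p).hasFDerivAt) hintegrable
  have insertNth_one (i : Fin 3) (x : Fin 2 → ℝ) :
      (i.insertNth 1 x : Fin 3 → ℝ) = (i.insertNth 0 x : Fin 3 → ℝ) + Pi.single i 1 := by
    ext j
    refine Fin.succAboveCases i ?_ (fun m => ?_) j <;> simp
  have opposite_faces (i : Fin 3) (x : Fin 2 → ℝ) :
      F i (i.insertNth 1 x) = F i (i.insertNth 0 x) := by
    fin_cases i
    · exact (hface _ (.inr rfl)).trans (hface _ (.inl rfl)).symm
    · exact (congrArg _ (insertNth_one 1 x)).trans (hper 1 (by decide) _).1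
    · exact (congrArg _ (insertNth_one 2 x)).trans (hper 2 (by decide) _).2
  simpa [divergence, pd, Cube, opposite_faces] using hdiv

-- Subtracting `curl U` changes neither the divergence nor the periodicity, and it removes the flux
-- through the faces.
theorem integral_divergence_eq_zero_of_eq_curl (hF : ∀ i, ContDiff ℝ 1 (F i))
    (hU : ∀ i, ContDiff ℝ 2 (U i)) (hFper : ∀ i ≠ 0, PerYZ (F i)) (hUper : ∀ i, PerYZ (U i))
    (hface : ∀ p : Fin 3 → ℝ, p 0 = 0 ∨ p 0 = 1 → F 0 p = curl U 0 p) :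
    ∫ p in Cube, divergence F p = 0 := by
  have hcurl := contDiff_curl hU one_add_one_eq_two.le
  have hdiv : divergence (F - curl U) = divergence F := by
    rw [divergence_sub (fun i => (hF i).differentiable one_ne_zero)
      (fun i => (hcurl i).differentiable one_ne_zero), divergence_curl hU, sub_zero]
  rw [← hdiv]
  refine integral_divergence_eq_zero (fun i => (hF i).sub (hcurl i)) (fun i hi p => ?_)
    (fun p hp => sub_eq_zero.2 (hface p hp))
  have hpd := fun a b => perYZ_pd (hUper b) a p
  simp [curl, hFper i hi p, hpd]

end DivergenceTheorem

section TensorFields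

variable {k : Fin 3 → Fin 3 → (Fin 3 → ℝ) → ℝ} {p : Fin 3 → ℝ}

theorem sum_epsR_mul (c : Fin 3 → Fin 3 → ℝ) (i : Fin 3) :
    ∑ a, ∑ b, epsR a b i * c a b = c (i + 1) (i + 2) - c (i + 2) (i + 1) := by
  fin_cases i <;> simp [Fin.sum_univ_three, epsR] <;> ring

theorem curlT_eq (hsymm : ∀ i j, k i j = k j i) (i j : Fin 3) :
    curlT k i j = (2⁻¹ : ℝ) • (curl (k j) i + curl (k i) j) := by
  ext p
  simp only [curlT, Finset.sum_add_distrib, hsymm _ j, hsymm _ i,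
    sum_epsR_mul fun a b => pd a (k _ b) p]
  simp only [curl, Pi.smul_apply, Pi.add_apply, Pi.sub_apply, smul_eq_mul]
  ring

theorem momT_eq_curl_sub_curl (hsymm : ∀ i j, k i j = k j i) (i : Fin 3) :
    momT k i = curl (k (i + 1)) (i + 2) - curl (k (i + 2)) (i + 1) := by
  ext p
  fin_cases i
  all_goals
    simp only [momT, curl, Fin.sum_univ_three, hsymm 1 0, hsymm 2 0, hsymm 2 1, Fin.zero_eta,
      Fin.mk_one, Fin.reduceFinMk, Fin.reduceAdd, zero_add, Pi.sub_apply]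
    ring

theorem momT_eq_pd_trace_sub_divergence (hk : ∀ i j, Differentiable ℝ (k i j)) (i : Fin 3) :
    momT k i = pd i (∑ j, k j j) - divergence (k i) := by
  ext p
  simp [momT, divergence, pd_sum _ _ fun j _ => hk j j]

theorem sum_sum_curl_sq (hsymm : ∀ i j, k i j = k j i) :
    ∑ j, ∑ i, curl (k j) i p ^ 2 = ∑ i, ∑ j, curlT k i j p ^ 2 + 2⁻¹ * ∑ i, momT k i p ^ 2 := by
  simp only [curlT_eq hsymm, momT_eq_curl_sub_curl hsymm, Fin.sum_univ_three, Pi.smul_apply,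
    Pi.add_apply, Pi.sub_apply, smul_eq_mul, zero_add, Fin.reduceAdd]
  ring

/-- The vector field through which the `L²` norm of `∂k` differs from quantities controlled by
`curl k` and `M k`: the null Lagrangians of the rows of `k`, the field `(tr k) div k`, and a
correction `k₁₂ curl k₃ - k₁₃ curl k₂` making the flux through the faces a tangential divergence. -/
noncomputable def energyFlux (k : Fin 3 → Fin 3 → (Fin 3 → ℝ) → ℝ) :
    Fin 3 → (Fin 3 → ℝ) → ℝ :=
  ∑ j, nullFlux (k j) + (2 : ℝ) •
    ((∑ j, k j j) • (fun i => divergence (k i)) - (k 0 1 • curl (k 2) - k 0 2 • curl (k 1)))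

/-- A vector field whose curl has the same normal component as `energyFlux k` on the faces
`x ∈ {0, 1}` when `k` satisfies the boundary conditions there. -/
noncomputable def facePotential (k : Fin 3 → Fin 3 → (Fin 3 → ℝ) → ℝ) :
    Fin 3 → (Fin 3 → ℝ) → ℝ :=
  ![0, (2 : ℝ) • ((k 1 1 + k 2 2) * k 0 2) - ∑ i, k 2 i * k 0 i,
    ∑ i, k 1 i * k 0 i - (2 : ℝ) • ((k 1 1 + k 2 2) * k 0 1)]

section Smoothness

variable {m n : WithTop ℕ∞}

theorem contDiff_energyFlux (hk : ∀ i j, ContDiff ℝ n (k i j)) (hmn : m + 1 ≤ n) (l : Fin 3) :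
    ContDiff ℝ m (energyFlux k l) := by
  have hk' := fun i j => (hk i j).of_le (le_self_add.trans hmn)
  have hnull : ContDiff ℝ m ((∑ j, nullFlux (k j)) l) := by
    rw [Finset.sum_apply]
    exact contDiff_finset_sum fun j _ => contDiff_nullFlux (hk j) hmn l
  have htrace : ContDiff ℝ m (∑ j, k j j) := contDiff_finset_sum fun j _ => hk' j j
  have hcross := fun a j => (hk' 0 a).mul (contDiff_curl (hk j) hmn l)
  exact hnull.add (((htrace.mul (contDiff_divergence (hk l) hmn)).sub
    ((hcross 1 2).sub (hcross 2 1))).const_smul (2 : ℝ))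

theorem contDiff_facePotential (hk : ∀ i j, ContDiff ℝ n (k i j)) (i : Fin 3) :
    ContDiff ℝ n (facePotential k i) := by
  have hrow (a : Fin 3) : ContDiff ℝ n (∑ i, k a i * k 0 i) :=
    contDiff_finset_sum fun i _ => (hk a i).mul (hk 0 i)
  have htangential := fun a => (((hk 1 1).add (hk 2 2)).mul (hk 0 a)).const_smul (2 : ℝ)
  fin_cases i
  · exact contDiff_const
  · exact (htangential 2).sub (hrow 2)
  · exact (hrow 1).sub (htangential 1)

end Smoothness

theorem perYZ_energyFlux (hper : ∀ i j, PerYZ (k i j)) (l : Fin 3) : PerYZ (energyFlux k l) := by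
  intro p
  have hk := fun i j => hper i j p
  have hpd := fun a i j => perYZ_pd (hper i j) a p
  simp [energyFlux, nullFlux, divergence, curl, hk, hpd]

theorem perYZ_facePotential (hper : ∀ i j, PerYZ (k i j)) (l : Fin 3) :
    PerYZ (facePotential k l) := by
  intro p
  have hk := fun i j => hper i j p
  fin_cases l <;> simp [facePotential, hk]

theorem energyFlux_eq_curl_facePotential (hsymm : ∀ i j, k i j = k j i)
    (hk : ∀ i j, Differentiable ℝ (k i j)) (hnormal : k 0 0 p = 0)
    (hface : pd 0 (k 0 0) p + 2 * pd 1 (k 0 1) p + 2 * pd 2 (k 0 2) p = 0) :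
    energyFlux k 0 p = curl (facePotential k) 0 p := by
  simp (disch := fun_prop) only [energyFlux, nullFlux, divergence, curl, facePotential,
    Fin.sum_univ_three, pd_add, pd_sub, pd_mul, pd_const_smul, hsymm 1 0, hsymm 2 0, hsymm 2 1,
    hnormal, Pi.add_apply, Pi.sub_apply, Pi.mul_apply, Pi.smul_apply, smul_eq_mul, zero_add,
    Matrix.cons_val]
  linear_combination 2 * (k 1 1 p + k 2 2 p) * hface

theorem integral_divergence_energyFlux (hsymm : ∀ i j, k i j = k j i)
    (hk : ∀ i j, ContDiff ℝ 2 (k i j)) (hper : ∀ i j, PerYZ (k i j))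
    (hface : ∀ p : Fin 3 → ℝ, p 0 = 0 ∨ p 0 = 1 →
      k 0 0 p = 0 ∧ pd 0 (k 0 0) p + 2 * pd 1 (k 0 1) p + 2 * pd 2 (k 0 2) p = 0) :
    ∫ p in Cube, divergence (energyFlux k) p = 0 :=
  integral_divergence_eq_zero_of_eq_curl (contDiff_energyFlux hk one_add_one_eq_two.le)
    (contDiff_facePotential hk) (fun i _ => perYZ_energyFlux hper i) (perYZ_facePotential hper)
    fun p hp => energyFlux_eq_curl_facePotential hsymm
      (fun i j => (hk i j).differentiable two_ne_zero) (hface p hp).1 (hface p hp).2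

theorem divergence_energyFlux (hk : ∀ i j, ContDiff ℝ 2 (k i j))
    (hdiv : ∑ i, ∑ j, pd i (pd j (k i j)) p = 0) :
    divergence (energyFlux k) p = ∑ j, divergence (nullFlux (k j)) p +
      2 * (∑ i, pd i (∑ j, k j j) p * divergence (k i) p -
        ∑ i, (pd i (k 0 1) p * curl (k 2) i p - pd i (k 0 2) p * curl (k 1) i p)) := by
  have hd := fun i j => (hk i j).differentiable two_ne_zero
  have hnull := fun j l =>
    (contDiff_nullFlux (hk j) one_add_one_eq_two.le l).differentiable one_ne_zero
  have hcurl := fun j l =>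
    (contDiff_curl (hk j) one_add_one_eq_two.le l).differentiable one_ne_zero
  have hrowdiv := fun i =>
    (contDiff_divergence (hk i) one_add_one_eq_two.le).differentiable one_ne_zero
  have htrace : Differentiable ℝ (∑ j, k j j) := Differentiable.sum fun j _ => hd j j
  have hdivdiv : divergence (fun i => divergence (k i)) p = 0 := by
    rw [← hdiv]
    simp [divergence, pd_sum _ _ fun j _ => (contDiff_one_pd (hk _ j) j).differentiable one_ne_zero]
  have hcross (a j l : Fin 3) : Differentiable ℝ ((k 0 a • curl (k j)) l) :=
    (hd 0 a).mul (hcurl j l)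
  have htracediv (l : Fin 3) : Differentiable ℝ (((∑ j, k j j) • fun i => divergence (k i)) l) :=
    htrace.mul (hrowdiv l)
  unfold energyFlux
  rw [divergence_add, divergence_sum _ fun j _ => hnull j, divergence_const_smul,
    divergence_sub htracediv, divergence_sub (hcross 1 2) (hcross 2 1),
    divergence_smul htrace hrowdiv, divergence_smul (hd 0 1) (hcurl 2),
    divergence_smul (hd 0 2) (hcurl 1), divergence_curl (hk 1), divergence_curl (hk 2)]
  · simp [hdivdiv]
  · exact fun l => (hcross 1 2 l).sub (hcross 2 1 l)
  · exact fun l => (htracediv l).sub ((hcross 1 2 l).sub (hcross 2 1 l))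
  · intro l
    rw [Finset.sum_apply]
    exact Differentiable.sum fun j _ => hnull j l
  · exact fun l => ((htracediv l).sub ((hcross 1 2 l).sub (hcross 2 1 l))).const_smul (2 : ℝ)

theorem sum_divergence_sq_le (hk : ∀ i j, Differentiable ℝ (k i j)) :
    ∑ i, divergence (k i) p ^ 2 ≤
      ∑ i, momT k i p ^ 2 + 2 * ∑ i, pd i (∑ j, k j j) p * divergence (k i) p := by
  rw [Finset.mul_sum, ← Finset.sum_add_distrib]
  refine Finset.sum_le_sum fun i _ => ?_
  rw [momT_eq_pd_trace_sub_divergence hk, Pi.sub_apply]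
  linarith [sq_nonneg (pd i (∑ j, k j j) p)]

theorem two_mul_sum_pd_mul_curl_le (k : Fin 3 → Fin 3 → (Fin 3 → ℝ) → ℝ) (p : Fin 3 → ℝ) :
    2 * ∑ i, (pd i (k 0 1) p * curl (k 2) i p - pd i (k 0 2) p * curl (k 1) i p) ≤
      (∑ i, ∑ j, ∑ l, pd l (k i j) p ^ 2) / 2 + 2 * ∑ j, ∑ i, curl (k j) i p ^ 2 := by
  have young (x y a b : ℝ) :
      2 * (x * a - y * b) ≤ (x ^ 2 + y ^ 2) / 2 + 2 * (a ^ 2 + b ^ 2) := by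
    linarith [sq_nonneg (x - 2 * a), sq_nonneg (y + 2 * b)]
  have hpd : ∑ l, (pd l (k 0 1) p ^ 2 + pd l (k 0 2) p ^ 2) ≤
      ∑ i, ∑ j, ∑ l, pd l (k i j) p ^ 2 := by
    have hrows : ∑ j, ∑ l, pd l (k 0 j) p ^ 2 ≤ ∑ i, ∑ j, ∑ l, pd l (k i j) p ^ 2 :=
      Finset.single_le_sum (f := fun i => ∑ j, ∑ l, pd l (k i j) p ^ 2)
        (fun i _ => by positivity) (Finset.mem_univ 0)
    rw [Fin.sum_univ_three] at hrows
    rw [Finset.sum_add_distrib]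
    linarith [show 0 ≤ ∑ l, pd l (k 0 0) p ^ 2 by positivity]
  have hcurl : ∑ i, (curl (k 2) i p ^ 2 + curl (k 1) i p ^ 2) ≤
      ∑ j, ∑ i, curl (k j) i p ^ 2 := by
    rw [Fin.sum_univ_three fun j => ∑ i, curl (k j) i p ^ 2, Finset.sum_add_distrib]
    linarith [show 0 ≤ ∑ i, curl (k 0) i p ^ 2 by positivity]
  have hyoung := Finset.sum_le_sum fun i (_ : i ∈ Finset.univ) =>
    young (pd i (k 0 1) p) (pd i (k 0 2) p) (curl (k 2) i p) (curl (k 1) i p)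
  rw [← Finset.mul_sum, Finset.sum_add_distrib, ← Finset.sum_div, ← Finset.mul_sum] at hyoung
  linarith

theorem sum_sum_sum_pd_sq_le (hsymm : ∀ i j, k i j = k j i) (hk : ∀ i j, ContDiff ℝ 2 (k i j))
    (hdiv : ∑ i, ∑ j, pd i (pd j (k i j)) p = 0) :
    ∑ i, ∑ j, ∑ l, pd l (k i j) p ^ 2 ≤ 6 * ∑ i, ∑ j, curlT k i j p ^ 2 +
      5 * ∑ i, momT k i p ^ 2 + 2 * divergence (energyFlux k) p := by
  have henergy : ∑ i, ∑ j, ∑ l, pd l (k i j) p ^ 2 = ∑ j, ∑ i, curl (k j) i p ^ 2 +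
      ∑ j, divergence (k j) p ^ 2 + ∑ j, divergence (nullFlux (k j)) p := by
    rw [← Finset.sum_add_distrib, ← Finset.sum_add_distrib]
    exact Finset.sum_congr rfl fun j _ => by simpa using congrFun (sum_sum_pd_sq (hk j)) p
  have hrows := sum_divergence_sq_le (p := p) fun i j => (hk i j).differentiable two_ne_zero
  linarith [divergence_energyFlux hk hdiv, two_mul_sum_pd_mul_curl_le k p,
    sum_sum_curl_sq (p := p) hsymm]

end TensorFields

theorem integral_sum_pd_sq_le {k : Fin 3 → Fin 3 → (Fin 3 → ℝ) → ℝ}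
    (hsymm : ∀ i j, k i j = k j i) (hk : ∀ i j, ContDiff ℝ 2 (k i j))
    (hper : ∀ i j, PerYZ (k i j))
    (hdiv : ∀ p ∈ Cube, ∑ i, ∑ j, pd i (pd j (k i j)) p = 0)
    (hface : ∀ p : Fin 3 → ℝ, p 0 = 0 ∨ p 0 = 1 →
      k 0 0 p = 0 ∧ pd 0 (k 0 0) p + 2 * pd 1 (k 0 1) p + 2 * pd 2 (k 0 2) p = 0) :
    ∫ p in Cube, ∑ i, ∑ j, ∑ l, pd l (k i j) p ^ 2 ≤
      6 * (∫ p in Cube, ∑ i, ∑ j, curlT k i j p ^ 2) +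
        5 * ∫ p in Cube, ∑ i, momT k i p ^ 2 := by
  have hpd := fun l i j => (contDiff_one_pd (hk i j) l).continuous
  have hS : IntegrableOn (fun p => 6 * ∑ i, ∑ j, curlT k i j p ^ 2) Cube :=
    integrableOn_cube (by unfold curlT; fun_prop)
  have hM : IntegrableOn (fun p => 5 * ∑ i, momT k i p ^ 2) Cube :=
    integrableOn_cube (by unfold momT; fun_prop)
  have hSM : IntegrableOn
      (fun p => 6 * ∑ i, ∑ j, curlT k i j p ^ 2 + 5 * ∑ i, momT k i p ^ 2) Cube := hS.add hM
  have hF : IntegrableOn (fun p => 2 * divergence (energyFlux k) p) Cube := by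
    have hflux := contDiff_energyFlux hk one_add_one_eq_two.le
    exact (integrableOn_cube (contDiff_divergence hflux (zero_add 1).le).continuous).const_mul 2
  calc ∫ p in Cube, ∑ i, ∑ j, ∑ l, pd l (k i j) p ^ 2
      ≤ ∫ p in Cube, (6 * ∑ i, ∑ j, curlT k i j p ^ 2 + 5 * ∑ i, momT k i p ^ 2 +
          2 * divergence (energyFlux k) p) :=
        setIntegral_mono_on (integrableOn_cube (by fun_prop)) (hSM.add hF)
          measurableSet_Icc fun p hp => sum_sum_sum_pd_sq_le hsymm hk (hdiv p hp)
    _ = ∫ p in Cube, (6 * ∑ i, ∑ j, curlT k i j p ^ 2 + 5 * ∑ i, momT k i p ^ 2) := by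
        rw [integral_add hSM hF, integral_const_mul,
          integral_divergence_energyFlux hsymm hk hper hface, mul_zero, add_zero]
    _ = 6 * (∫ p in Cube, ∑ i, ∑ j, curlT k i j p ^ 2) +
          5 * ∫ p in Cube, ∑ i, momT k i p ^ 2 := by
        rw [integral_add hS hM, integral_const_mul, integral_const_mul]

theorem stmt13_general {k : Fin 3 → Fin 3 → (Fin 3 → ℝ) → ℝ}
    (hsymm : ∀ i j, k i j = k j i) (hk : ∀ i j, ContDiff ℝ 2 (k i j))
    (hper : ∀ i j, PerYZ (k i j))
    (hdiv : ∀ p ∈ Cube, ∑ i, ∑ j, pd i (pd j (k i j)) p = 0)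
    (hface : ∀ p : Fin 3 → ℝ, p 0 = 0 ∨ p 0 = 1 →
      k 0 0 p = 0 ∧ pd 0 (k 0 0) p + 2 * pd 1 (k 0 1) p + 2 * pd 2 (k 0 2) p = 0) :
    ∫ p in Cube, ∑ i, ∑ j, (k i j p ^ 2 + ∑ l, pd l (k i j) p ^ 2) ≤
      6 * ((∫ p in Cube, ∑ i, ∑ j, k i j p ^ 2) + (∫ p in Cube, ∑ i, ∑ j, curlT k i j p ^ 2) +
        ∫ p in Cube, ∑ i, momT k i p ^ 2) := by
  have hcont := fun i j => (hk i j).continuous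
  have hpd := fun l i j => (contDiff_one_pd (hk i j) l).continuous
  have hsplit : ∫ p in Cube, ∑ i, ∑ j, (k i j p ^ 2 + ∑ l, pd l (k i j) p ^ 2) =
      (∫ p in Cube, ∑ i, ∑ j, k i j p ^ 2) +
        ∫ p in Cube, ∑ i, ∑ j, ∑ l, pd l (k i j) p ^ 2 := by
    simp only [Finset.sum_add_distrib]
    exact integral_add (integrableOn_cube (by fun_prop)) (integrableOn_cube (by fun_prop))
  have hk_nonneg : 0 ≤ ∫ p in Cube, ∑ i, ∑ j, k i j p ^ 2 :=
    integral_nonneg fun p => by positivity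
  have hM_nonneg : 0 ≤ ∫ p in Cube, ∑ i, momT k i p ^ 2 :=
    integral_nonneg fun p => by positivity
  linarith [integral_sum_pd_sq_le hsymm hk hper hdiv hface]

/-- The key estimate for gauge-fixed extrinsic curvatures: there is
`C > 0` such that for every symmetric smooth periodic tensor field `k` with
`∂ᵢ∂ⱼk_{ij} = 0` on `[0,1] × ℝ²` and the boundary conditions `k₁₁ = 0` and
`∂₁k₁₁ + 2∂₂k₁₂ + 2∂₃k₁₃ = 0` on the faces `x ∈ {0,1}`, the `H¹` norm of `k` is
controlled by the `L²` norms of `k`, `curl k` and `M k`. -/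
theorem stmt13 :
    ∃ C : ℝ, 0 < C ∧ ∀ k : Fin 3 → Fin 3 → (Fin 3 → ℝ) → ℝ,
      (∀ i j, k i j = k j i) →
      (∀ i j, ContDiff ℝ (⊤ : ℕ∞) (k i j)) →
      (∀ i j, PerYZ (k i j)) →
      (∀ p : Fin 3 → ℝ, p 0 ∈ Set.Icc (0 : ℝ) 1 → ∑ i, ∑ j, pd i (pd j (k i j)) p = 0) →
      (∀ p : Fin 3 → ℝ, p 0 = 0 ∨ p 0 = 1 →
        k 0 0 p = 0 ∧ pd 0 (k 0 0) p + 2 * pd 1 (k 0 1) p + 2 * pd 2 (k 0 2) p = 0) →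
      (∫ p in Cube, ∑ i, ∑ j, ((k i j p) ^ 2 + ∑ l, (pd l (k i j) p) ^ 2)) ≤
        C * ((∫ p in Cube, ∑ i, ∑ j, (k i j p) ^ 2)
          + (∫ p in Cube, ∑ i, ∑ j, (curlT k i j p) ^ 2)
          + (∫ p in Cube, ∑ i, (momT k i p) ^ 2)) := by
  exact ⟨6, by norm_num, fun k hsymm hk hper hdiv hface =>
    stmt13_general hsymm (fun i j => (hk i j).of_le (WithTop.coe_le_coe.2 le_top)) hper
      (fun p hp => hdiv p ⟨hp.1 0, hp.2 0⟩) hface⟩
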